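/- Let H be a real Hilbert space and let a : H × H → ℝ be a bilinear form of the form a(u, v) = c(u, v) + ⟨K u, v⟩, where c is a bounded bilinear form that is coercive (there are M ≥ 0 and α > 0 with |c(u, v)| ≤ M‖u‖‖v‖ and c(v, v) ≥ α‖v‖² for all u, v ∈ H) and K : H →L H is a compact operator. Then the homogeneous problem a(u, v) = 0 for all v ∈ H has only the solution u = 0 if and only if the adjoint homogeneous problem a(v, u) = 0 for all v ∈ H has only the solution u = 0. -/

import Mathlib

open RealInnerProductSpace

/-!
By Lax–Milgram, `c u v = ⟪A u, v⟫` with `A` invertible. Hence `a u v = ⟪T u, v⟫` for `T = A + K`,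
and the two uniqueness assumptions say that `T`, respectively its adjoint `T†`, is injective. Since
`T = A (1 + A⁻¹ K)`, the Fredholm alternative makes an injective `T` surjective, and the adjoint of
a surjective operator is injective. The converse is the same argument for `T† = A† + K†`, as `K†`
is compact by Schauder's theorem.
-/

open ContinuousLinearMap Function Set
open scoped InnerProduct

theorem totallyBounded_image_of_forall_dist_lt {ι X Y : Type*} [PseudoMetricSpace X]
    [PseudoMetricSpace Y] {f : ι → X} {g : ι → Y} {s : Set ι} (hf : TotallyBounded (f '' s))
    (hfg : ∀ ε > 0, ∃ δ > 0, ∀ i ∈ s, ∀ j ∈ s, dist (f i) (f j) < δ → dist (g i) (g j) < ε) :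
    TotallyBounded (g '' s) := by
  refine Metric.totallyBounded_iff.2 fun ε hε ↦ ?_
  obtain ⟨δ, hδ, hδε⟩ := hfg ε hε
  obtain ⟨t, ht, ht_fin, hcover⟩ : ∃ t ⊆ s, t.Finite ∧ f '' s ⊆ ⋃ y ∈ f '' t, Metric.ball y δ :=
    exists_subset_image_finite_and.1 (Metric.finite_approx_of_totallyBounded hf δ hδ)
  refine ⟨g '' t, ht_fin.image g, ?_⟩
  rintro _ ⟨i, hi, rfl⟩
  obtain ⟨j, hj, hij⟩ : ∃ j ∈ t, dist (f i) (f j) < δ := by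
    simpa using hcover (mem_image_of_mem f hi)
  exact mem_biUnion (mem_image_of_mem g hj) (hδε i hi j (ht hj) hij)

section FredholmAlternative

variable {𝕜 E F : Type*} [NontriviallyNormedField 𝕜]
  [NormedAddCommGroup E] [NormedSpace 𝕜 E] [CompleteSpace E]
  [NormedAddCommGroup F] [NormedSpace 𝕜 F]

theorem surjective_one_add_isCompactOperator_of_injective {T : E →L[𝕜] E}
    (hT : IsCompactOperator T) (hinj : Injective (1 + T : E →L[𝕜] E)) :
    Surjective (1 + T : E →L[𝕜] E) := by
  rcases hT.hasEigenvalue_or_mem_resolventSet (neg_ne_zero.2 (one_ne_zero (α := 𝕜))) with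
    heigen | hresolvent
  · obtain ⟨x, hx⟩ := heigen.exists_hasEigenvector
    have hTx : T x = -x := by simpa using hx.apply_eq_smul
    exact absurd (hinj (by simp [hTx])) hx.2
  · have hunit : IsUnit (1 + T) := by
      simpa [add_comm] using (spectrum.mem_resolventSet_iff.1 hresolvent).neg
    exact (isUnit_iff_bijective.1 hunit).surjective

theorem surjective_add_isCompactOperator_of_injective {A K : E →L[𝕜] F} (hA : A.IsInvertible)
    (hK : IsCompactOperator K) (hinj : Injective (A + K)) : Surjective (A + K) := by
  obtain ⟨e, rfl⟩ := hA
  have hfactor : ⇑(e + K : E →L[𝕜] F) = e ∘ (1 + e.symm ∘L K : E →L[𝕜] E) := by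
    ext x
    simp
  rw [hfactor] at hinj ⊢
  have hcompact : IsCompactOperator (e.symm ∘L K : E →L[𝕜] E) := hK.clm_comp (e.symm : F →L[𝕜] E)
  exact e.surjective.comp
    (surjective_one_add_isCompactOperator_of_injective hcompact hinj.of_comp)

end FredholmAlternative

section Adjoint

variable {𝕜 E F : Type*} [RCLike 𝕜]
  [NormedAddCommGroup E] [InnerProductSpace 𝕜 E] [CompleteSpace E]
  [NormedAddCommGroup F] [InnerProductSpace 𝕜 F] [CompleteSpace F]

theorem sq_norm_adjoint_apply_le (T : E →L[𝕜] F) (y : F) : ‖(T†) y‖ ^ 2 ≤ ‖T ((T†) y)‖ * ‖y‖ := by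
  simpa using (apply_norm_sq_eq_inner_adjoint_left (T†) y).trans_le (re_inner_le_norm _ _)

theorem isCompactOperator_adjoint {K : E →L[𝕜] F} (hK : IsCompactOperator K) :
    IsCompactOperator (K†) := by
  have hKK : IsCompactOperator (K ∘L K†).toLinearMap := hK.comp_clm (K†)
  have hKK_image : TotallyBounded ((K ∘L K†) '' Metric.closedBall 0 1) :=
    (hKK.isCompact_closure_image_closedBall 1).totallyBounded.subset subset_closure
  suffices hK_image : TotallyBounded ((K†) '' Metric.closedBall 0 1) from
    (isCompactOperator_iff_isCompact_closure_image_closedBall (K†).toLinearMap one_pos).2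
      (hK_image.closure.isCompact_of_isClosed isClosed_closure)
  refine totallyBounded_image_of_forall_dist_lt hKK_image fun ε hε ↦
    ⟨ε ^ 2 / 2, by positivity, fun x hx y hy hxy ↦ ?_⟩
  have hxy_norm : ‖x - y‖ ≤ 2 := by
    rw [mem_closedBall_zero_iff] at hx hy
    linarith [norm_sub_le x y]
  have hKK_lt : ‖K ((K†) (x - y))‖ < ε ^ 2 / 2 := by simpa [dist_eq_norm] using hxy
  suffices ‖(K†) (x - y)‖ < ε by simpa [dist_eq_norm] using this
  refine lt_of_pow_lt_pow_left₀ 2 hε.le ?_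
  calc
    ‖(K†) (x - y)‖ ^ 2 ≤ ‖K ((K†) (x - y))‖ * ‖x - y‖ := sq_norm_adjoint_apply_le K (x - y)
    _ ≤ ‖K ((K†) (x - y))‖ * 2 := by gcongr
    _ < ε ^ 2 := by linarith

theorem isInvertible_adjoint {A : E →L[𝕜] F} (hA : A.IsInvertible) : (A†).IsInvertible := by
  obtain ⟨e, rfl⟩ := hA
  refine .of_inverse (g := (e.symm : F →L[𝕜] E)†) ?_ ?_ <;> simp [← adjoint_comp, adjoint_id]

theorem injective_adjoint_of_surjective {T : E →L[𝕜] F} (hT : Surjective T) : Injective (T†) := by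
  rw [← coe_coe, ← LinearMap.ker_eq_bot, ← orthogonal_range, LinearMap.range_eq_top.2 hT,
    Submodule.top_orthogonal_eq_bot]

theorem injective_add_isCompactOperator_iff_injective_adjoint {A K : E →L[𝕜] F}
    (hA : A.IsInvertible) (hK : IsCompactOperator K) :
    Injective (A + K) ↔ Injective ((A + K)†) where
  mp hinj := injective_adjoint_of_surjective
    (surjective_add_isCompactOperator_of_injective hA hK hinj)
  mpr hinj := by
    have hsurj : Surjective ((A + K)†) := by
      rw [map_add] at hinj ⊢
      exact surjective_add_isCompactOperator_of_injective (isInvertible_adjoint hA)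
        (isCompactOperator_adjoint hK) hinj
    simpa only [adjoint_adjoint] using injective_adjoint_of_surjective hsurj

theorem injective_adjoint_iff_forall_inner_apply_eq_zero (T : E →L[𝕜] F) :
    Injective (T†) ↔ ∀ y, (∀ x, inner 𝕜 (T x) y = 0) → y = 0 := by
  simp only [injective_iff_map_eq_zero, ext_iff_inner_left 𝕜 (y := (0 : E)), inner_zero_right,
    adjoint_inner_right]

end Adjoint

theorem injective_iff_forall_inner_apply_eq_zero {𝕜 E F : Type*} [RCLike 𝕜]
    [NormedAddCommGroup E] [NormedSpace 𝕜 E] [NormedAddCommGroup F] [InnerProductSpace 𝕜 F]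
    (T : E →L[𝕜] F) : Injective T ↔ ∀ x, (∀ y, inner 𝕜 (T x) y = 0) → x = 0 := by
  simp only [injective_iff_map_eq_zero, ext_iff_inner_right 𝕜 (y := (0 : F)), inner_zero_left]

theorem exists_isInvertible_inner_eq_of_coercive {H : Type*} [NormedAddCommGroup H]
    [InnerProductSpace ℝ H] [CompleteSpace H] (c : H →ₗ[ℝ] H →ₗ[ℝ] ℝ) {M α : ℝ}
    (hbound : ∀ u v : H, |c u v| ≤ M * ‖u‖ * ‖v‖) (hα : 0 < α)
    (hcoercive : ∀ v : H, α * ‖v‖ ^ 2 ≤ c v v) :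
    ∃ A : H →L[ℝ] H, A.IsInvertible ∧ ∀ u v : H, ⟪A u, v⟫ = c u v := by
  have hB : IsCoercive (c.mkContinuous₂ M hbound) :=
    ⟨α, hα, fun v ↦ by simpa [sq, mul_assoc] using hcoercive v⟩
  exact ⟨hB.continuousLinearEquivOfBilin, isInvertible_equiv, fun u v ↦ by simp⟩

/-- **Equivalence of the uniqueness assumptions for a problem and its adjoint.**
Let `a(u,v) = c(u,v) + ⟪K u, v⟫` on a real Hilbert space `H`, where `c` is a bounded
coercive bilinear form and `K` is a compact operator.  Then the homogeneous problem
`a(u, ·) = 0` has only the zero solution iff the adjoint homogeneous problem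
`a(·, u) = 0` has only the zero solution. -/
theorem uniqueness_iff_adjoint_uniqueness
    {H : Type*} [NormedAddCommGroup H] [InnerProductSpace ℝ H] [CompleteSpace H]
    (a : H → H → ℝ) (c : H →ₗ[ℝ] H →ₗ[ℝ] ℝ) (K : H →L[ℝ] H)
    (M : ℝ) (hM : 0 ≤ M) (hcbound : ∀ u v : H, |c u v| ≤ M * ‖u‖ * ‖v‖)
    (α : ℝ) (hα : 0 < α) (hccoer : ∀ v : H, α * ‖v‖ ^ 2 ≤ c v v)
    (hK : IsCompactOperator K)
    (ha : ∀ u v : H, a u v = c u v + ⟪K u, v⟫) :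
    (∀ u : H, (∀ v : H, a u v = 0) → u = 0) ↔
      (∀ u : H, (∀ v : H, a v u = 0) → u = 0) := by
  obtain ⟨A, hA, hAc⟩ := exists_isInvertible_inner_eq_of_coercive c hcbound hα hccoer
  have haT : ∀ u v : H, a u v = ⟪(A + K) u, v⟫ := fun u v ↦ by
    rw [ha, ← hAc, add_apply, inner_add_left]
  simp only [haT]
  rw [← injective_iff_forall_inner_apply_eq_zero,
    ← injective_adjoint_iff_forall_inner_apply_eq_zero]
  exact injective_add_isCompactOperator_iff_injective_adjoint hA hK
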